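/- arXiv:1203.3447 — 6 statements merged into one kernel-verified Lean document; each statement's English description precedes it below -/
import Mathlib

section
/- Let k ≥ 3 be an integer and let G be a simple graph on a finite vertex set V admitting a partition V = V_1 ∪ … ∪ V_{k−1} into pairwise disjoint sets, together with Hamilton cycles C_1, …, C_{k−1} of the induced subgraphs G[V_1], …, G[V_{k−1}], satisfying properties (i)–(vi). Then G is k-vertex-connected. -/
theorem aux_cycle {V : Type*} [Fintype V] (C : SimpleGraph V) (P : Finset V)
    (hCin : ∀ u v : V, C.Adj u v → u ∈ P ∧ v ∈ P)
    (hCconn : (C.induce (↑P : Set V)).Connected)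
    (hCdeg : ∀ u ∈ P, (C.neighborSet u).ncard = 2)
    (s : V) (hs : s ∈ P) (u v : V) (hu : u ∈ P) (hv : v ∈ P) (hus : u ≠ s) (hvs : v ≠ s) :
    ∃ p : C.Walk u v, s ∉ p.support := by
  classical
  have hcyc : C.IsCycles := by
    intro x ⟨y, hy⟩
    exact hCdeg x (hCin x y hy).1
  have hreach : ∀ x ∈ P, C.Reachable s x := by
    intro x hx
    have := hCconn.preconnected ⟨s, hs⟩ ⟨x, hx⟩
    exact this.map (SimpleGraph.Embedding.induce _).toHom
  have hne : (C.neighborSet s).Nonempty := by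
    rw [← Set.ncard_pos (Set.toFinite _), hCdeg s hs]; norm_num
  obtain ⟨p, hp, hpv⟩ := hcyc.exists_cycle_toSubgraph_verts_eq_connectedComponentSupp
    (v := s) (c := C.connectedComponentMk s) rfl hne
  have hmem : ∀ x ∈ P, x ∈ p.support := by
    intro x hx
    rw [← SimpleGraph.Walk.mem_verts_toSubgraph, hpv]
    exact (SimpleGraph.ConnectedComponent.eq.2 (hreach x hx)).symm
  cases p with
  | nil => exact absurd hp (by simp)
  | @cons _ a _ h q =>
    rw [SimpleGraph.Walk.cons_isCycle_iff] at hp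
    have key : ∀ x ∈ P, x ≠ s → ∃ r : C.Walk a x, s ∉ r.support := by
      intro x hx hxs
      have h1 := hmem x hx
      rw [SimpleGraph.Walk.support_cons, List.mem_cons] at h1
      have h2 := h1.resolve_left hxs
      exact ⟨q.takeUntil x h2, SimpleGraph.Walk.endpoint_notMem_support_takeUntil hp.1 h2 hxs.symm⟩
    obtain ⟨r1, h1⟩ := key u hu hus
    obtain ⟨r2, h2⟩ := key v hv hvs
    refine ⟨r1.reverse.append r2, ?_⟩
    simp [SimpleGraph.Walk.mem_support_append_iff, h1, h2]

theorem aux_four {V : Type*} [Fintype V] (C : SimpleGraph V) (P : Finset V)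
    (hP5 : 5 ≤ P.card)
    (hCin : ∀ u v : V, C.Adj u v → u ∈ P ∧ v ∈ P)
    (hCconn : (C.induce (↑P : Set V)).Connected)
    (hCdeg : ∀ u ∈ P, (C.neighborSet u).ncard = 2)
    (v w : V) (hv : v ∈ P) (hvw : v ≠ w) (h : C.neighborSet v = C.neighborSet w) : False := by
  classical
  obtain ⟨x, y, hxy, hN⟩ := Set.ncard_eq_two.1 (hCdeg v hv)
  have hN' := h.symm.trans hN
  have hz : ∀ z ∈ C.neighborSet v, C.neighborSet z = {v, w} := by
    intro z hz
    symm
    apply Set.eq_of_subset_of_ncard_le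
    · rintro a (rfl | rfl)
      · exact (show C.Adj _ _ from hz).symm
      · rw [h] at hz
        exact (show C.Adj _ _ from hz).symm
    · rw [hCdeg z (hCin _ _ hz).2, Set.ncard_pair hvw]
    · exact Set.toFinite _
  have hx := hz x (by rw [hN]; simp)
  have hy := hz y (by rw [hN]; simp)
  have hcl : ∀ a b, C.Adj a b → a ∈ ({v, w, x, y} : Finset V) → b ∈ ({v, w, x, y} : Finset V) := by
    intro a b hab ha
    have hb : b ∈ C.neighborSet a := hab
    simp only [Finset.mem_insert, Finset.mem_singleton] at ha ⊢
    rcases ha with rfl | rfl | rfl | rfl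
    · rw [hN] at hb; simp at hb; tauto
    · rw [hN'] at hb; simp at hb; tauto
    · rw [hx] at hb; simp at hb; tauto
    · rw [hy] at hb; simp at hb; tauto
  have hw : ∀ a b, C.Walk a b → a ∈ ({v, w, x, y} : Finset V) → b ∈ ({v, w, x, y} : Finset V) := by
    intro a b p
    induction p with
    | nil => exact id
    | cons hab _ ih => exact fun ha => ih (hcl _ _ hab ha)
  have hsub : P ⊆ {v, w, x, y} := by
    intro z hz
    have := hCconn.preconnected ⟨v, hv⟩ ⟨z, hz⟩
    obtain ⟨p⟩ : C.Reachable v z := this.map (SimpleGraph.Embedding.induce _).toHom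
    exact hw _ _ p (by simp)
  have := Finset.card_le_card hsub
  have := Finset.card_le_four (a := v) (b := w) (c := x) (d := y)
  omega

set_option maxHeartbeats 1000000 in
/-- Let `k ≥ 3` and let `G` be a simple graph on a finite vertex set `V`
admitting a partition `V = V_1 ∪ … ∪ V_{k-1}` into pairwise disjoint sets, together with
Hamilton cycles `C_1, …, C_{k-1}` of the induced subgraphs `G[V_i]` (formalized: each `C i`
is a subgraph of `G` whose edges lie inside `V i`, which is connected on `V i` and in which
every vertex of `V i` has degree exactly `2`), satisfying properties (i)–(vi).
Then `G` is `k`-vertex-connected: `|V| > k` and for every `S ⊆ V` with `|S| ≤ k - 1`,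
the subgraph of `G` induced on `V \ S` is connected. -/
theorem stmt_0 {V : Type*} [Fintype V] (k : ℕ) (hk : 3 ≤ k)
    (G : SimpleGraph V) (P : Fin (k - 1) → Finset V) (C : Fin (k - 1) → SimpleGraph V)
    -- the `P i` partition `V`
    (hPdisj : ∀ i j : Fin (k - 1), i ≠ j → Disjoint (P i) (P j))
    (hPcover : ∀ v : V, ∃ i : Fin (k - 1), v ∈ P i)
    -- (i) `|V_i| ≥ 5`
    (hP5 : ∀ i : Fin (k - 1), 5 ≤ (P i).card)
    -- (ii) every vertex has degree at least `k` in `G`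
    (hdeg : ∀ v : V, k ≤ (G.neighborSet v).ncard)
    -- (iii) `C i` is a Hamilton cycle of `G[V_i]`
    (hCle : ∀ i, C i ≤ G)
    (hCin : ∀ i, ∀ u v : V, (C i).Adj u v → u ∈ P i ∧ v ∈ P i)
    (hCconn : ∀ i, ((C i).induce (↑(P i) : Set V)).Connected)
    (hCdeg : ∀ i, ∀ u ∈ P i, ((C i).neighborSet u).ncard = 2)
    -- (iv) a matching of size `3` between `V_i` and `V_j`
    (hmatch : ∀ i j : Fin (k - 1), i < j →
      ∃ x y : Fin 3 → V, Function.Injective x ∧ Function.Injective y ∧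
        ∀ a : Fin 3, x a ∈ P i ∧ y a ∈ P j ∧ G.Adj (x a) (y a))
    -- (v) every `u ∈ V_i` has a neighbor in all but at most one `V_j`, `j ≠ i`
    (hdom : ∀ i : Fin (k - 1), ∀ u ∈ P i,
      {j : Fin (k - 1) | j ≠ i ∧ ∀ w ∈ P j, ¬ G.Adj u w}.Subsingleton)
    -- (vi) two distinct vertices of `V_i`, each having exactly one index `j ≠ i` with no
    -- neighbor in `V_j`, are not consecutive on the cycle `C i`
    (hfar : ∀ i : Fin (k - 1), ∀ u ∈ P i, ∀ v ∈ P i, u ≠ v →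
      (∃! j : Fin (k - 1), j ≠ i ∧ ∀ w ∈ P j, ¬ G.Adj u w) →
      (∃! j : Fin (k - 1), j ≠ i ∧ ∀ w ∈ P j, ¬ G.Adj v w) →
      ¬ (C i).Adj u v) :
    k < Fintype.card V ∧
      ∀ S : Set V, S.ncard ≤ k - 1 → (G.induce Sᶜ).Connected := by
  classical
  have hcard : ∀ F : Finset V, ∑ i, (P i ∩ F).card = F.card := by
    intro F
    rw [← Finset.card_biUnion]
    · congr 1
      ext v
      simp only [Finset.mem_biUnion, Finset.mem_univ, true_and, Finset.mem_inter]
      exact ⟨fun ⟨_, h⟩ => h.2, fun h => (hPcover v).imp fun _ hi => ⟨hi, h⟩⟩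
    · intro i _ j _ hij
      exact (hPdisj i j hij).mono Finset.inter_subset_left Finset.inter_subset_left
  constructor
  · have h1 := hcard Finset.univ
    have h2 : ∑ i : Fin (k - 1), 5 ≤ ∑ i, (P i ∩ Finset.univ).card :=
      Finset.sum_le_sum fun i _ => by simpa using hP5 i
    simp only [Finset.sum_const, Finset.card_univ, Fintype.card_fin, smul_eq_mul] at h1 h2
    omega
  intro S hS
  obtain ⟨F, rfl⟩ : ∃ F : Finset V, (F : Set V) = S := ⟨S.toFinset, by simp⟩
  rw [Set.ncard_coe_finset] at hS
  have hsum := hcard F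
  -- reachability avoiding F
  let R : V → V → Prop := fun u v => ∃ p : G.Walk u v, ∀ x ∈ p.support, x ∉ F
  have Rsymm : ∀ u v, R u v → R v u := by
    rintro u v ⟨p, hp⟩
    exact ⟨p.reverse, by simpa using hp⟩
  have Rtrans : ∀ u v w, R u v → R v w → R u w := by
    rintro u v w ⟨p, hp⟩ ⟨q, hq⟩
    refine ⟨p.append q, fun x hx => ?_⟩
    rw [SimpleGraph.Walk.mem_support_append_iff] at hx
    exact hx.elim (hp x) (hq x)
  have Radj : ∀ u v, G.Adj u v → u ∉ F → v ∉ F → R u v := by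
    intro u v h hu hv
    refine ⟨h.toWalk, ?_⟩
    simp [hu, hv]
  have hCsupp : ∀ i, ∀ u v (p : (C i).Walk u v), u ∈ P i → ∀ x ∈ p.support, x ∈ P i := by
    intro i u v p
    induction p with
    | nil => intro hu x hx; simp at hx; exact hx ▸ hu
    | cons h p ih =>
      intro hu x hx
      rw [SimpleGraph.Walk.support_cons, List.mem_cons] at hx
      rcases hx with rfl | hx
      · exact hu
      · exact ih (hCin i _ _ h).2 x hx
  -- good parts are internally connected
  have hgood : ∀ i, (P i ∩ F).card ≤ 1 → ∀ u ∈ P i, ∀ v ∈ P i, u ∉ F → v ∉ F → R u v := by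
    intro i hi u hu v hv huF hvF
    obtain ⟨s, hs, hus, hvs, hsF⟩ : ∃ s ∈ P i, u ≠ s ∧ v ≠ s ∧ ∀ x ∈ P i, x ∈ F → x = s := by
      by_cases he : (P i ∩ F).Nonempty
      · obtain ⟨s, hs⟩ := he
        rw [Finset.mem_inter] at hs
        refine ⟨s, hs.1, fun h => huF (h ▸ hs.2), fun h => hvF (h ▸ hs.2), fun x hx hxF => ?_⟩
        exact Finset.card_le_one.1 hi x (by simp [hx, hxF]) s (by simp [hs])
      · have : ∃ s ∈ P i, s ∉ ({u, v} : Finset V) := by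
          apply Finset.exists_mem_notMem_of_card_lt_card
          have := Finset.card_le_two (a := u) (b := v)
          have := hP5 i
          omega
        obtain ⟨s, hs, hs'⟩ := this
        simp only [Finset.mem_insert, Finset.mem_singleton, not_or] at hs'
        refine ⟨s, hs, Ne.symm hs'.1, Ne.symm hs'.2, fun x hx hxF => ?_⟩
        exact absurd ⟨x, by simp [hx, hxF]⟩ he
    obtain ⟨p, hp⟩ := aux_cycle (C i) (P i) (hCin i) (hCconn i) (hCdeg i) s hs u v hu hv hus hvs
    refine ⟨p.mapLe (hCle i), fun x hx hxF => ?_⟩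
    rw [SimpleGraph.Walk.support_mapLe_eq_support] at hx
    exact hp (hsF x (hCsupp i u v p hu x hx) hxF ▸ hx)
  -- two good parts are connected
  have hgood2lt : ∀ i j, i < j → (P i ∩ F).card ≤ 1 → (P j ∩ F).card ≤ 1 →
      ∀ u ∈ P i, ∀ v ∈ P j, u ∉ F → v ∉ F → R u v := by
    intro i j hij hi hj u hu v hv huF hvF
    obtain ⟨x, y, hx, hy, hxy⟩ := hmatch i j hij
    obtain ⟨a, hxa, hya⟩ : ∃ a, x a ∉ F ∧ y a ∉ F := by
      by_contra hcon
      push Not at hcon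
      have hx1 : ∀ a b, a ≠ b → x a ∈ F → x b ∉ F := fun a b hab ha hb =>
        hab (hx (Finset.card_le_one.1 hi _ (by simp [ha, (hxy a).1]) _ (by simp [hb, (hxy b).1])))
      have hy1 : ∀ a b, a ≠ b → y a ∈ F → y b ∉ F := fun a b hab ha hb =>
        hab (hy (Finset.card_le_one.1 hj _ (by simp [ha, (hxy a).2.1]) _ (by simp [hb, (hxy b).2.1])))
      have h0 := hcon 0
      have h1 := hcon 1
      have h2 := hcon 2
      have a1 := hx1 0 1 (by decide)
      have a2 := hx1 0 2 (by decide)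
      have a3 := hx1 1 2 (by decide)
      have b1 := hy1 0 1 (by decide)
      have b2 := hy1 0 2 (by decide)
      have b3 := hy1 1 2 (by decide)
      tauto
    obtain ⟨h1, h2, h3⟩ := hxy a
    exact Rtrans _ _ _ (hgood i hi u hu _ h1 huF hxa)
      (Rtrans _ _ _ (Radj _ _ h3 hxa hya) (hgood j hj _ h2 v hv hya hvF))
  have hgood2 : ∀ i j, (P i ∩ F).card ≤ 1 → (P j ∩ F).card ≤ 1 →
      ∀ u ∈ P i, ∀ v ∈ P j, u ∉ F → v ∉ F → R u v := by
    intro i j hi hj u hu v hv huF hvF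
    rcases lt_trichotomy i j with h | rfl | h
    · exact hgood2lt i j h hi hj u hu v hv huF hvF
    · exact hgood i hi u hu v hv huF hvF
    · exact Rsymm _ _ (hgood2lt j i h hj hi v hv u hu hvF huF)
  -- base vertex
  obtain ⟨i₁, hi₁⟩ : ∃ i, (P i ∩ F).card ≤ 1 := by
    by_contra hcon
    push Not at hcon
    have h2 : ∑ i : Fin (k - 1), 2 ≤ ∑ i, (P i ∩ F).card :=
      Finset.sum_le_sum fun i _ => hcon i
    simp only [Finset.sum_const, Finset.card_univ, Fintype.card_fin, smul_eq_mul] at h2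
    omega
  obtain ⟨a, ha, haF⟩ : ∃ a ∈ P i₁, a ∉ F := by
    by_contra hcon
    push Not at hcon
    have : P i₁ ∩ F = P i₁ := Finset.inter_eq_left.2 hcon
    have h5 := hP5 i₁
    rw [this] at hi₁
    omega
  have hall : ∀ v, v ∉ F → R a v := by
    by_contra hcon
    push Not at hcon
    obtain ⟨v, hvF, hv⟩ := hcon
    obtain ⟨j, hvj⟩ := hPcover v
    have hbad : ∀ i w, w ∈ P i → w ∉ F → ¬ R a w → 2 ≤ (P i ∩ F).card := by
      intro i w hw hwF hR
      by_contra hlt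
      exact hR (hgood2 i₁ i hi₁ (by omega) a ha w hw haF hwF)
    have hnb : ∀ u w, u ∉ F → ¬ R a u → G.Adj u w → w ∉ F → ¬ R a w := by
      intro u w hu hR h hw hR'
      exact hR (Rtrans _ _ _ hR' (Radj _ _ h.symm hw hu))
    have hzero : ∀ i, (P i ∩ F).card = 0 → ∀ u, u ∉ F → ¬ R a u → ∀ w ∈ P i, ¬ G.Adj u w := by
      intro i hi u hu hR w hw h
      have hwF : w ∉ F := fun h' => by
        have : w ∈ P i ∩ F := by simp [hw, h']
        rw [Finset.card_eq_zero.1 hi] at this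
        simp at this
      have := hbad i w hw hwF (hnb u w hu hR h hwF)
      omega
    have hj2 := hbad j v hvj hvF hv
    obtain ⟨i₀, hi₀⟩ : ∃ i, (P i ∩ F).card = 0 := by
      by_contra hcon
      push Not at hcon
      have h2 : ∑ i : Fin (k - 1), 1 < ∑ i, (P i ∩ F).card :=
        Finset.sum_lt_sum (fun i _ => Nat.one_le_iff_ne_zero.2 (hcon i)) ⟨j, Finset.mem_univ _, hj2⟩
      simp only [Finset.sum_const, Finset.card_univ, Fintype.card_fin, smul_eq_mul] at h2
      omega
    have hi₀j : i₀ ≠ j := by rintro rfl; omega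
    have huniq : ∀ i, (P i ∩ F).card = 0 → i = i₀ := by
      intro i hi
      have hij : i ≠ j := by rintro rfl; omega
      exact hdom j v hvj ⟨hij, hzero i hi v hvF hv⟩ ⟨hi₀j, hzero i₀ hi₀ v hvF hv⟩
    have hrest : ((P j ∩ F).card) + ∑ i ∈ (Finset.univ.erase i₀).erase j, (P i ∩ F).card ≤ k - 1 := by
      rw [Finset.add_sum_erase (Finset.univ.erase i₀) (fun i => (P i ∩ F).card) (by simp [hi₀j.symm])]
      have := Finset.add_sum_erase Finset.univ (fun i => (P i ∩ F).card) (Finset.mem_univ i₀)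
      omega
    have hcardrest : ((Finset.univ.erase i₀).erase j).card = k - 3 := by
      rw [Finset.card_erase_of_mem (by simp [hi₀j.symm]), Finset.card_erase_of_mem (by simp)]
      simp
      omega
    have hge1 : ∀ i ∈ (Finset.univ.erase i₀).erase j, 1 ≤ (P i ∩ F).card := by
      intro i hi
      simp only [Finset.mem_erase, Finset.mem_univ, and_true] at hi
      by_contra hlt
      exact hi.2 (huniq i (by omega))
    have hle := Finset.sum_le_sum hge1
    simp only [Finset.sum_const, smul_eq_mul, mul_one, hcardrest] at hle
    have hj2' : (P j ∩ F).card = 2 := by omega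
    have hbadj : ∀ i, 2 ≤ (P i ∩ F).card → i = j := by
      intro i hi
      by_contra hij
      have hii : i ≠ i₀ := by rintro rfl; omega
      have := Finset.sum_lt_sum hge1 ⟨i, by simp [hij, hii], hi⟩
      simp only [Finset.sum_const, smul_eq_mul, mul_one, hcardrest] at this
      omega
    have hmemj : ∀ w, w ∉ F → ¬ R a w → w ∈ P j := by
      intro w hw hR
      obtain ⟨i, hi⟩ := hPcover w
      exact hbadj i (hbad i w hi hw hR) ▸ hi
    have hex : ∀ u, u ∉ F → ¬ R a u → ∃! i : Fin (k - 1), i ≠ j ∧ ∀ w ∈ P i, ¬ G.Adj u w := by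
      intro u hu hR
      refine ⟨i₀, ⟨hi₀j, hzero i₀ hi₀ u hu hR⟩, fun i hi => ?_⟩
      exact hdom j u (hmemj u hu hR) hi ⟨hi₀j, hzero i₀ hi₀ u hu hR⟩
    have hNC : ∀ u, u ∉ F → ¬ R a u → (C j).neighborSet u = ↑(P j ∩ F) := by
      intro u hu hR
      apply Set.eq_of_subset_of_ncard_le
      · intro w hw
        have hw : (C j).Adj u w := hw
        have hwF : w ∈ F := by
          by_contra hwF
          have hRw := hnb u w hu hR (hCle j hw) hwF
          exact hfar j u (hmemj u hu hR) w (hmemj w hwF hRw) hw.ne (hex u hu hR) (hex w hwF hRw) hw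
        simp [hwF, (hCin j _ _ hw).2]
      · rw [hCdeg j u (hmemj u hu hR), Set.ncard_coe_finset, hj2']
      · exact Set.toFinite _
    obtain ⟨w, hvw, hwF⟩ : ∃ w, G.Adj v w ∧ w ∉ F := by
      by_contra hcon
      push Not at hcon
      have h1 : (G.neighborSet v).ncard ≤ (F : Set V).ncard :=
        Set.ncard_le_ncard (fun w hw => hcon w hw) (Set.toFinite _)
      rw [Set.ncard_coe_finset] at h1
      have := hdeg v
      omega
    have hRw := hnb v w hvF hv hvw hwF
    exact aux_four (C j) (P j) (hP5 j) (hCin j) (hCconn j) (hCdeg j) v w hvj hvw.ne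
      ((hNC v hvF hv).trans (hNC w hwF hRw).symm)
  rw [SimpleGraph.connected_iff_exists_forall_reachable]
  refine ⟨⟨a, by simpa using haF⟩, ?_⟩
  rintro ⟨v, hv⟩
  obtain ⟨p, hp⟩ := hall v (by simpa using hv)
  exact ⟨p.induce _ (fun x hx => by simpa using hp x hx)⟩
end

section
/- Let k ≥ 3 be an integer and let G be a simple graph on a finite vertex set V admitting a partition V = V_1 ∪ … ∪ V_{k−1} into pairwise disjoint sets satisfying properties (i), (iii) and (iv). Then for every set S ⊆ V with |S ∩ V_i| = 1 for every 1 ≤ i ≤ k−1, the subgraph of G induced on V \ S is connected. -/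
lemma aux_cyc {V : Type*} [Fintype V] (C : SimpleGraph V) (s : V) (A : Set V)
    (hs : s ∉ A) (hdeg : ∀ a ∈ A, (C.neighborSet a).ncard = 2)
    (hsdeg : (C.neighborSet s).ncard = 2)
    (hcl : ∀ a ∈ A, ∀ b, C.Adj a b → b ∈ A ∨ b = s)
    (hex : ∃ a ∈ A, C.Adj a s) : C.neighborSet s ⊆ A := by
  classical
  let H : SimpleGraph V :=
    { Adj := fun a b => C.Adj a b ∧ a ∈ A ∧ b ∈ A
      symm := ⟨fun a b h => ⟨h.1.symm, h.2.2, h.2.1⟩⟩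
      loopless := ⟨fun a h => C.loopless.irrefl a h.1⟩ }
  have hH := H.even_card_odd_degree_vertices
  have hN : ∀ a, H.degree a = (H.neighborSet a).ncard := fun a => by
    rw [← SimpleGraph.card_neighborSet_eq_degree, Set.ncard_eq_toFinset_card', Set.toFinset_card]
  have hodd : ∀ a, Odd (H.degree a) ↔ a ∈ C.neighborSet s ∩ A := by
    intro a
    rw [hN]
    by_cases ha : a ∈ A
    · by_cases has : C.Adj a s
      · have : H.neighborSet a = C.neighborSet a \ {s} := by
          ext b
          have := hcl a ha b
          simp only [SimpleGraph.mem_neighborSet, Set.mem_sdiff, Set.mem_singleton_iff, H]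
          constructor
          · rintro ⟨h1, h2, h3⟩
            exact ⟨h1, fun h => hs (h ▸ h3)⟩
          · rintro ⟨h1, h2⟩
            exact ⟨h1, ha, (this h1).resolve_right h2⟩
        rw [this, Set.ncard_sdiff_singleton_of_mem (by exact has), hdeg a ha]
        simp [ha, has.symm]
      · have : H.neighborSet a = C.neighborSet a := by
          ext b
          have := hcl a ha b
          simp only [SimpleGraph.mem_neighborSet, H]
          constructor
          · exact fun h => h.1
          · intro h1
            exact ⟨h1, ha, (this h1).resolve_right (fun h => has (h ▸ h1))⟩
        rw [this, hdeg a ha]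
        have h2 : ¬ C.Adj s a := fun h => has h.symm
        simp [h2]
    · have : H.neighborSet a = ∅ := by
        ext b
        simp [H, ha]
      rw [this]
      simp [ha]
  have hE : Even (C.neighborSet s ∩ A).ncard := by
    have h1 : (C.neighborSet s ∩ A) = ↑(Finset.univ.filter fun v => Odd (H.degree v)) := by
      ext a; simp only [Finset.coe_filter, Finset.mem_univ, true_and, Set.mem_ofPred_eq, hodd]
    rw [h1, Set.ncard_coe_finset]
    convert hH
  have hpos : 0 < (C.neighborSet s ∩ A).ncard := by
    rw [Set.ncard_pos]
    obtain ⟨a, ha, h⟩ := hex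
    exact ⟨a, h.symm, ha⟩
  have h2 : 2 ≤ (C.neighborSet s ∩ A).ncard := by
    obtain ⟨r, hr⟩ := hE
    omega
  have := Set.eq_of_subset_of_ncard_le (Set.inter_subset_left (s := C.neighborSet s) (t := A))
    (by omega)
  rw [← this]
  exact Set.inter_subset_right


/-- Let `k ≥ 3` and let `G` be a simple graph on a finite vertex set `V`
admitting a partition `V = V_1 ∪ … ∪ V_{k-1}` into pairwise disjoint sets satisfying
(i) `|V_i| ≥ 5`, (iii) each induced subgraph `G[V_i]` has a Hamilton cycle (formalized:
a subgraph of `G` with edges inside `V_i`, connected on `V_i`, in which every vertex of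
`V_i` has degree exactly `2`), and (iv) for `i < j` there is a matching of size `3`
between `V_i` and `V_j`. Then for every set `S ⊆ V` with `|S ∩ V_i| = 1` for every `i`,
the subgraph of `G` induced on `V \ S` is connected. -/
theorem stmt_1 {V : Type*} [Fintype V] (k : ℕ) (hk : 3 ≤ k)
    (G : SimpleGraph V) (P : Fin (k - 1) → Finset V)
    -- the `P i` partition `V`
    (hPdisj : ∀ i j : Fin (k - 1), i ≠ j → Disjoint (P i) (P j))
    (hPcover : ∀ v : V, ∃ i : Fin (k - 1), v ∈ P i)
    -- (i) `|V_i| ≥ 5`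
    (hP5 : ∀ i : Fin (k - 1), 5 ≤ (P i).card)
    -- (iii) `G[V_i]` has a Hamilton cycle
    (hHam : ∀ i : Fin (k - 1), ∃ C : SimpleGraph V, C ≤ G ∧
      (∀ u v : V, C.Adj u v → u ∈ P i ∧ v ∈ P i) ∧
      (C.induce (↑(P i) : Set V)).Connected ∧
      ∀ u ∈ P i, (C.neighborSet u).ncard = 2)
    -- (iv) a matching of size `3` between `V_i` and `V_j`
    (hmatch : ∀ i j : Fin (k - 1), i < j →
      ∃ x y : Fin 3 → V, Function.Injective x ∧ Function.Injective y ∧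
        ∀ a : Fin 3, x a ∈ P i ∧ y a ∈ P j ∧ G.Adj (x a) (y a)) :
    ∀ S : Set V, (∀ i : Fin (k - 1), (S ∩ ↑(P i)).ncard = 1) →
      (G.induce Sᶜ).Connected := by
  intro S hS
  classical
  have hS' : ∀ i, ∃ s, s ∈ S ∧ s ∈ P i ∧ ∀ t ∈ S, t ∈ P i → t = s := by
    intro i
    obtain ⟨s, hs⟩ := Set.ncard_eq_one.1 (hS i)
    have h1 : s ∈ S ∩ ↑(P i) := by rw [hs]; rfl
    refine ⟨s, h1.1, by simpa using h1.2, fun t ht htP => ?_⟩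
    have : t ∈ S ∩ ↑(P i) := ⟨ht, by simpa using htP⟩
    rw [hs] at this
    exact this
  let R : V → V → Prop := fun u v => ∃ (hu : u ∈ Sᶜ) (hv : v ∈ Sᶜ),
    (G.induce Sᶜ).Reachable ⟨u, hu⟩ ⟨v, hv⟩
  have Rrefl : ∀ u, u ∉ S → R u u := fun u hu => ⟨hu, hu, SimpleGraph.Reachable.refl _⟩
  have Rsymm : ∀ u v, R u v → R v u := fun u v ⟨a, b, h⟩ => ⟨b, a, h.symm⟩
  have Rtrans : ∀ u v w, R u v → R v w → R u w :=
    fun u v w ⟨a, b, h⟩ ⟨_, c, h'⟩ => ⟨a, c, h.trans h'⟩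
  have Radj : ∀ u v, u ∉ S → v ∉ S → G.Adj u v → R u v :=
    fun u v hu hv h => ⟨hu, hv, SimpleGraph.Adj.reachable (by simpa using h)⟩
  have Rin : ∀ i u v, u ∈ P i → v ∈ P i → u ∉ S → v ∉ S → R u v := by
    intro i
    obtain ⟨C, hCG, hCP, hconn, hdeg⟩ := hHam i
    obtain ⟨s, hsS, hsP, hs⟩ := hS' i
    have key : ∀ u, u ∈ P i → u ∉ S → C.neighborSet s ⊆ {w | w ∈ P i ∧ R u w} := by
      intro u hu huS
      have hcl : ∀ a ∈ {w | w ∈ P i ∧ R u w}, ∀ b, C.Adj a b →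
          b ∈ {w | w ∈ P i ∧ R u w} ∨ b = s := by
        rintro a ⟨haP, haR⟩ b hab
        have hbP := (hCP a b hab).2
        by_cases hb : b ∈ S
        · exact Or.inr (hs b hb hbP)
        · exact Or.inl ⟨hbP, Rtrans _ _ _ haR (Radj a b haR.2.1 hb (hCG hab))⟩
      have hsA : s ∉ {w | w ∈ P i ∧ R u w} := fun h => h.2.2.1 hsS
      refine aux_cyc C s _ hsA (fun a ha => hdeg a ha.1) (hdeg s hsP) hcl ?_
      by_contra hno
      push Not at hno
      have hwalk : ∀ (x y : (↑(P i) : Set V)), (C.induce (↑(P i) : Set V)).Walk x y →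
          R u x.1 → R u y.1 := by
        intro x y p
        induction p with
        | nil => exact id
        | @cons a b c h p ih =>
          intro ha
          have hab : C.Adj a.1 b.1 := by simpa using h
          have haA : a.1 ∈ {w | w ∈ P i ∧ R u w} := ⟨(hCP _ _ hab).1, ha⟩
          rcases hcl _ haA _ hab with h1 | h1
          · exact ih h1.2
          · exact absurd (h1 ▸ hab) (hno _ haA)
      obtain ⟨p⟩ := hconn.preconnected ⟨u, by simpa using hu⟩ ⟨s, by simpa using hsP⟩
      exact (hwalk _ _ p (Rrefl u huS)).2.1 hsS
    intro u v hu hv huS hvS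
    have hne : (C.neighborSet s).Nonempty := by
      rw [← Set.ncard_pos, hdeg s hsP]; norm_num
    obtain ⟨w, hw⟩ := hne
    exact Rtrans _ _ _ (key u hu huS hw).2 (Rsymm _ _ (key v hv hvS hw).2)
  have Rlt : ∀ i j, i < j → ∀ u v, u ∈ P i → v ∈ P j → u ∉ S → v ∉ S → R u v := by
    intro i j hij u v hu hv huS hvS
    obtain ⟨x, y, hx, hy, h⟩ := hmatch i j hij
    obtain ⟨s, hsS, hsP, hs⟩ := hS' i
    obtain ⟨t, htS, htP, ht⟩ := hS' j
    have : ∃ a, x a ≠ s ∧ y a ≠ t := by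
      by_contra hno
      push Not at hno
      have x01 : x 0 ≠ x 1 := fun h => by simpa using hx h
      have x02 : x 0 ≠ x 2 := fun h => by simpa using hx h
      have x12 : x 1 ≠ x 2 := fun h => by simpa using hx h
      have y01 : y 0 ≠ y 1 := fun h => by simpa using hy h
      have y02 : y 0 ≠ y 2 := fun h => by simpa using hy h
      have y12 : y 1 ≠ y 2 := fun h => by simpa using hy h
      have h0 := hno 0
      have h1 := hno 1
      have h2 := hno 2
      clear hno Rin Radj Rtrans Rsymm Rrefl R hS' hs ht h hS hmatch hHam hPcover hPdisj hP5
      by_cases e0 : x 0 = s <;> by_cases e1 : x 1 = s <;> by_cases e2 : x 2 = s <;> grind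
    obtain ⟨a, hxa, hya⟩ := this
    obtain ⟨h1, h2, h3⟩ := h a
    have hxS : x a ∉ S := fun h => hxa (hs _ h h1)
    have hyS : y a ∉ S := fun h => hya (ht _ h h2)
    exact Rtrans _ _ _ (Rin i _ _ hu h1 huS hxS)
      (Rtrans _ _ _ (Radj _ _ hxS hyS h3) (Rin j _ _ h2 hv hyS hvS))
  have Rall : ∀ u v, u ∉ S → v ∉ S → R u v := by
    intro u v hu hv
    obtain ⟨i, hi⟩ := hPcover u
    obtain ⟨j, hj⟩ := hPcover v
    rcases lt_trichotomy i j with h | h | h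
    · exact Rlt i j h u v hi hj hu hv
    · subst h; exact Rin i u v hi hj hu hv
    · exact Rsymm _ _ (Rlt j i h v u hj hi hv hu)
  have hne : ∃ u, u ∉ S := by
    let i : Fin (k - 1) := ⟨0, by omega⟩
    obtain ⟨s, hsS, hsP, hs⟩ := hS' i
    obtain ⟨u, hu, hus⟩ := Finset.exists_mem_ne (s := P i) (by have := hP5 i; omega) s
    exact ⟨u, fun h => hus (hs u h hu)⟩
  obtain ⟨u0, hu0⟩ := hne
  haveI : Nonempty (Sᶜ : Set V) := ⟨⟨u0, hu0⟩⟩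
  refine SimpleGraph.Connected.mk ?_
  rintro ⟨u, hu⟩ ⟨v, hv⟩
  exact (Rall u v hu hv).2.2
end

section
/- Let k ≥ 3 be an integer and let G be a simple graph on a finite vertex set V admitting a partition V = V_1 ∪ … ∪ V_{k−1} into pairwise disjoint sets satisfying properties (i), (iii), (iv) and (v). Then for all distinct indices i, j ∈ {1,…,k−1} and every set S ⊆ V with S ∩ (V_i ∪ V_j) = ∅, the subgraph of G induced on V \ S is connected. -/
/-- Let `k ≥ 3` and let `G` be a simple graph on a finite vertex set `V`
admitting a partition `V = V_1 ∪ … ∪ V_{k-1}` into pairwise disjoint sets satisfying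
(i) `|V_i| ≥ 5`, (iii) each induced subgraph `G[V_i]` has a Hamilton cycle (formalized:
a subgraph of `G` with edges inside `V_i`, connected on `V_i`, in which every vertex of
`V_i` has degree exactly `2`), (iv) for `i < j` there is a matching of size `3` between
`V_i` and `V_j`, and (v) every `u ∈ V_i` has a neighbor in all but at most one `V_j`,
`j ≠ i`. Then for all distinct indices `i, j` and every set `S ⊆ V` with
`S ∩ (V_i ∪ V_j) = ∅`, the subgraph of `G` induced on `V \ S` is connected. -/
theorem stmt_2 {V : Type*} [Fintype V] (k : ℕ) (hk : 3 ≤ k)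
    (G : SimpleGraph V) (P : Fin (k - 1) → Finset V)
    -- the `P i` partition `V`
    (hPdisj : ∀ i j : Fin (k - 1), i ≠ j → Disjoint (P i) (P j))
    (hPcover : ∀ v : V, ∃ i : Fin (k - 1), v ∈ P i)
    -- (i) `|V_i| ≥ 5`
    (hP5 : ∀ i : Fin (k - 1), 5 ≤ (P i).card)
    -- (iii) `G[V_i]` has a Hamilton cycle
    (hHam : ∀ i : Fin (k - 1), ∃ C : SimpleGraph V, C ≤ G ∧
      (∀ u v : V, C.Adj u v → u ∈ P i ∧ v ∈ P i) ∧
      (C.induce (↑(P i) : Set V)).Connected ∧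
      ∀ u ∈ P i, (C.neighborSet u).ncard = 2)
    -- (iv) a matching of size `3` between `V_i` and `V_j`
    (hmatch : ∀ i j : Fin (k - 1), i < j →
      ∃ x y : Fin 3 → V, Function.Injective x ∧ Function.Injective y ∧
        ∀ a : Fin 3, x a ∈ P i ∧ y a ∈ P j ∧ G.Adj (x a) (y a))
    -- (v) every `u ∈ V_i` has a neighbor in all but at most one `V_j`, `j ≠ i`
    (hdom : ∀ i : Fin (k - 1), ∀ u ∈ P i,
      {j : Fin (k - 1) | j ≠ i ∧ ∀ w ∈ P j, ¬ G.Adj u w}.Subsingleton) :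
    ∀ i j : Fin (k - 1), i ≠ j → ∀ S : Set V,
      S ∩ (↑(P i) ∪ ↑(P j)) = ∅ → (G.induce Sᶜ).Connected := by
  intro i j hij S hS
  have hnot : ∀ l, (l = i ∨ l = j) → ∀ v ∈ P l, v ∈ Sᶜ := by
    intro l hl v hv hvS
    have : v ∈ S ∩ (↑(P i) ∪ ↑(P j)) := by
      refine ⟨hvS, ?_⟩
      rcases hl with rfl | rfl
      · exact Or.inl hv
      · exact Or.inr hv
    rw [hS] at this
    exact this
  have hin : ∀ l, (l = i ∨ l = j) → ∀ u v (hu : u ∈ Sᶜ) (hv : v ∈ Sᶜ), u ∈ P l → v ∈ P l →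
      (G.induce Sᶜ).Reachable ⟨u, hu⟩ ⟨v, hv⟩ := by
    intro l hl u v hu hv hul hvl
    obtain ⟨C, hCG, -, hconn, -⟩ := hHam l
    let f : C.induce (↑(P l) : Set V) →g G.induce Sᶜ :=
      { toFun := fun x => ⟨x.1, hnot l hl x.1 x.2⟩
        map_rel' := fun {a b} h => hCG h }
    exact (hconn.preconnected ⟨u, hul⟩ ⟨v, hvl⟩).map f
  have hedge : ∃ a b, a ∈ P i ∧ b ∈ P j ∧ G.Adj a b := by
    rcases lt_or_gt_of_ne hij with h | h
    · obtain ⟨x, y, -, -, hxy⟩ := hmatch i j h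
      exact ⟨x 0, y 0, hxy 0⟩
    · obtain ⟨x, y, -, -, hxy⟩ := hmatch j i h
      exact ⟨y 0, x 0, (hxy 0).2.1, (hxy 0).1, (hxy 0).2.2.symm⟩
  obtain ⟨a, b, ha, hb, hab⟩ := hedge
  have haS := hnot i (Or.inl rfl) a ha
  have hbS := hnot j (Or.inr rfl) b hb
  have habR : (G.induce Sᶜ).Reachable ⟨b, hbS⟩ ⟨a, haS⟩ :=
    SimpleGraph.Adj.reachable (by simpa using hab.symm)
  have hbase : ∀ l, (l = i ∨ l = j) → ∀ u (hu : u ∈ Sᶜ), u ∈ P l →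
      (G.induce Sᶜ).Reachable ⟨u, hu⟩ ⟨a, haS⟩ := by
    intro l hl u hu hul
    rcases hl with rfl | rfl
    · exact hin _ (Or.inl rfl) _ _ _ _ hul ha
    · exact (hin _ (Or.inr rfl) _ _ _ _ hul hb).trans habR
  have hall : ∀ u (hu : u ∈ Sᶜ), (G.induce Sᶜ).Reachable ⟨u, hu⟩ ⟨a, haS⟩ := by
    intro u hu
    obtain ⟨l, hl⟩ := hPcover u
    by_cases hlij : l = i ∨ l = j
    · exact hbase l hlij u hu hl
    · push Not at hlij
      have hw : ∃ m, (m = i ∨ m = j) ∧ ∃ w ∈ P m, G.Adj u w := by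
        by_contra hcon
        push Not at hcon
        exact hij (hdom l u hl ⟨hlij.1.symm, hcon i (Or.inl rfl)⟩
          ⟨hlij.2.symm, hcon j (Or.inr rfl)⟩)
      obtain ⟨m, hm, w, hwm, huw⟩ := hw
      have hwS := hnot m hm w hwm
      have h1 : (G.induce Sᶜ).Reachable ⟨u, hu⟩ ⟨w, hwS⟩ :=
        SimpleGraph.Adj.reachable (by simpa using huw)
      exact h1.trans (hbase m hm w hwS hwm)
  haveI : Nonempty ↑(Sᶜ) := ⟨⟨a, haS⟩⟩
  exact SimpleGraph.Connected.mk fun u v => (hall u.1 u.2).trans (hall v.1 v.2).symm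
end

section
/- Let k ≥ 3 be an integer and let G be a simple graph on a finite vertex set V admitting a partition V = V_1 ∪ … ∪ V_{k−1} into pairwise disjoint sets, together with Hamilton cycles C_1, …, C_{k−1} of the induced subgraphs G[V_1], …, G[V_{k−1}], satisfying properties (i)–(vi). Let S ⊆ V be a set for which there exist distinct indices i, j ∈ {1,…,k−1} such that S ∩ V_i = ∅, |S ∩ V_j| = 2, and |S ∩ V_t| = 1 for every t ∈ {1,…,k−1} \ {i,j}. Then the subgraph of G induced on V \ S is connected. -/
/-- Let `k ≥ 3` and let `G` be a simple graph on a finite vertex set `V`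
admitting a partition `V = V_1 ∪ … ∪ V_{k-1}` into pairwise disjoint sets, together with
Hamilton cycles `C_1, …, C_{k-1}` of the induced subgraphs `G[V_i]`, satisfying
properties (i)–(vi). Let `S ⊆ V` be a set for which there exist distinct indices `i, j`
with `S ∩ V_i = ∅`, `|S ∩ V_j| = 2` and `|S ∩ V_t| = 1` for every `t ∉ {i, j}`.
Then the subgraph of `G` induced on `V \ S` is connected. -/
theorem stmt_3 {V : Type*} [Fintype V] (k : ℕ) (hk : 3 ≤ k)
    (G : SimpleGraph V) (P : Fin (k - 1) → Finset V) (C : Fin (k - 1) → SimpleGraph V)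
    -- the `P i` partition `V`
    (hPdisj : ∀ i j : Fin (k - 1), i ≠ j → Disjoint (P i) (P j))
    (hPcover : ∀ v : V, ∃ i : Fin (k - 1), v ∈ P i)
    -- (i) `|V_i| ≥ 5`
    (hP5 : ∀ i : Fin (k - 1), 5 ≤ (P i).card)
    -- (ii) every vertex has degree at least `k` in `G`
    (hdeg : ∀ v : V, k ≤ (G.neighborSet v).ncard)
    -- (iii) `C i` is a Hamilton cycle of `G[V_i]`
    (hCle : ∀ i, C i ≤ G)
    (hCin : ∀ i, ∀ u v : V, (C i).Adj u v → u ∈ P i ∧ v ∈ P i)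
    (hCconn : ∀ i, ((C i).induce (↑(P i) : Set V)).Connected)
    (hCdeg : ∀ i, ∀ u ∈ P i, ((C i).neighborSet u).ncard = 2)
    -- (iv) a matching of size `3` between `V_i` and `V_j`
    (hmatch : ∀ i j : Fin (k - 1), i < j →
      ∃ x y : Fin 3 → V, Function.Injective x ∧ Function.Injective y ∧
        ∀ a : Fin 3, x a ∈ P i ∧ y a ∈ P j ∧ G.Adj (x a) (y a))
    -- (v) every `u ∈ V_i` has a neighbor in all but at most one `V_j`, `j ≠ i`
    (hdom : ∀ i : Fin (k - 1), ∀ u ∈ P i,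
      {j : Fin (k - 1) | j ≠ i ∧ ∀ w ∈ P j, ¬ G.Adj u w}.Subsingleton)
    -- (vi) two distinct vertices of `V_i`, each having exactly one index `j ≠ i` with no
    -- neighbor in `V_j`, are not consecutive on the cycle `C i`
    (hfar : ∀ i : Fin (k - 1), ∀ u ∈ P i, ∀ v ∈ P i, u ≠ v →
      (∃! j : Fin (k - 1), j ≠ i ∧ ∀ w ∈ P j, ¬ G.Adj u w) →
      (∃! j : Fin (k - 1), j ≠ i ∧ ∀ w ∈ P j, ¬ G.Adj v w) →
      ¬ (C i).Adj u v)
    -- the special set `S`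
    (S : Set V) (i j : Fin (k - 1)) (hij : i ≠ j)
    (hSi : S ∩ ↑(P i) = ∅) (hSj : (S ∩ ↑(P j)).ncard = 2)
    (hSt : ∀ t : Fin (k - 1), t ≠ i → t ≠ j → (S ∩ ↑(P t)).ncard = 1) :
    (G.induce Sᶜ).Connected := by
  classical
  have hiS : ∀ v ∈ P i, v ∈ Sᶜ := by
    intro v hv hS
    have : v ∈ S ∩ (↑(P i) : Set V) := ⟨hS, hv⟩
    rw [hSi] at this
    exact this
  obtain ⟨b, hb⟩ : (P i).Nonempty := by
    rw [← Finset.card_pos]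
    have := hP5 i
    omega
  let R : V → Prop := fun x => ∃ h : x ∈ Sᶜ, (G.induce Sᶜ).Reachable ⟨x, h⟩ ⟨b, hiS b hb⟩
  have step : ∀ x y, x ∉ S → G.Adj x y → R y → R x := by
    rintro x y hx hxy ⟨hy, hr⟩
    refine ⟨hx, SimpleGraph.Reachable.trans (SimpleGraph.Adj.reachable ?_) hr⟩
    exact hxy
  have Ri : ∀ x ∈ P i, R x := by
    intro x hx
    refine ⟨hiS x hx, ?_⟩
    let f : (C i).induce (↑(P i) : Set V) →g G.induce Sᶜ :=
      ⟨fun v => ⟨v.1, hiS v.1 v.2⟩, fun {a b} h => hCle i h⟩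
    have := (hCconn i).preconnected ⟨x, hx⟩ ⟨b, hb⟩
    exact this.map f
  -- bad vertices
  have bad : ∀ t, t ≠ i → ∀ u ∈ P t, u ∉ S → ¬ R u →
      ∃! l : Fin (k - 1), l ≠ t ∧ ∀ w ∈ P l, ¬ G.Adj u w := by
    intro t ht u hu huS hR
    have hm : i ≠ t ∧ ∀ w ∈ P i, ¬ G.Adj u w :=
      ⟨ht.symm, fun w hw ha => hR (step u w huS ha (Ri w hw))⟩
    exact ⟨i, hm, fun l hl => hdom t u hu hl hm⟩
  have nbr : ∀ t, t ≠ i → ∀ u ∈ P t, u ∉ S → ¬ R u → ∀ v, (C t).Adj u v → v ∈ S := by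
    intro t ht u hu huS hR v hv
    by_contra hvS
    have hvP := (hCin t u v hv).2
    have hRv : ¬ R v := fun h => hR (step u v huS (hCle t hv) h)
    exact hfar t u hu v hvP hv.ne (bad t ht u hu huS hR) (bad t ht v hvP hvS hRv) hv
  have nbr' : ∀ t, t ≠ i → ∀ u ∈ P t, u ∉ S → ¬ R u →
      (C t).neighborSet u ⊆ S ∩ (↑(P t) : Set V) := by
    intro t ht u hu huS hR v hv
    exact ⟨nbr t ht u hu huS hR v hv, (hCin t u v hv).2⟩
  have Rt : ∀ t, t ≠ j → ∀ u ∈ P t, u ∉ S → R u := by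
    intro t htj u hu huS
    by_cases hti : t = i
    · subst hti; exact Ri u hu
    by_contra hR
    have h1 := Set.ncard_le_ncard (nbr' t hti u hu huS hR) (Set.toFinite _)
    rw [hCdeg t u hu, hSt t hti htj] at h1
    omega
  have hScard : S.ncard ≤ k - 1 := by
    have h1 : S ⊆ ⋃ t, (S ∩ (↑(P t) : Set V)) := by
      intro v hv
      obtain ⟨t, ht⟩ := hPcover v
      exact Set.mem_iUnion.2 ⟨t, hv, ht⟩
    have h2 : S.ncard ≤ ∑ t, (S ∩ (↑(P t) : Set V)).ncard := by
      have h3 : S.toFinset ⊆ Finset.univ.biUnion (fun t => (S ∩ (↑(P t) : Set V)).toFinset) := by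
        intro v hv
        obtain ⟨t, ht⟩ := hPcover v
        simp only [Finset.mem_biUnion, Set.mem_toFinset] at hv ⊢
        exact ⟨t, Finset.mem_univ _, hv, ht⟩
      have h4 := (Finset.card_le_card h3).trans Finset.card_biUnion_le
      simpa only [Set.ncard_eq_toFinset_card'] using h4
    have h5 : ∑ t, ((S ∩ (↑(P t) : Set V)).ncard + if t = i then 1 else 0)
        = ∑ t : Fin (k - 1), (1 + if t = j then 1 else 0) := by
      refine Finset.sum_congr rfl fun t _ => ?_
      by_cases hti : t = i
      · subst hti
        simp [hSi, hij]
      by_cases htj : t = j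
      · subst htj
        simp [hSj, hti]
      · simp [hti, htj, hSt t hti htj]
    simp only [Finset.sum_add_distrib, Finset.sum_ite_eq', Finset.mem_univ, if_true,
      Finset.sum_const, Finset.card_univ, Fintype.card_fin, smul_eq_mul, mul_one] at h5
    omega
  have Rj : ∀ u ∈ P j, u ∉ S → R u := by
    intro u hu huS
    by_contra hR
    obtain ⟨w, hw, hwS⟩ : ∃ w, G.Adj u w ∧ w ∉ S := by
      by_contra! hcon
      have h1 : G.neighborSet u ⊆ S := fun w hw => hcon w hw
      have h2 := Set.ncard_le_ncard h1 (Set.toFinite _)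
      have h3 := hdeg u
      omega
    have hRw : ¬ R w := fun h => hR (step u w huS hw h)
    have hwj : w ∈ P j := by
      obtain ⟨t, ht⟩ := hPcover w
      by_cases htj : t = j
      · exact htj ▸ ht
      · exact absurd (Rt t htj w ht hwS) hRw
    have key : ∀ x ∈ P j, x ∉ S → ¬ R x → (C j).neighborSet x = S ∩ (↑(P j) : Set V) := by
      intro x hx hxS hRx
      refine Set.eq_of_subset_of_ncard_le (nbr' j hij.symm x hx hxS hRx) ?_ (Set.toFinite _)
      rw [hCdeg j x hx, hSj]
    have ku := key u hu huS hR
    have kw := key w hwj hwS hRw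
    have ks : ∀ s ∈ S ∩ (↑(P j) : Set V), (C j).neighborSet s = {u, w} := by
      intro s hs
      symm
      refine Set.eq_of_subset_of_ncard_le ?_ ?_ (Set.toFinite _)
      · intro x hx
        rcases hx with rfl | rfl
        · rw [← ku] at hs; exact hs.symm
        · rw [← kw] at hs; exact hs.symm
      · rw [hCdeg j s hs.2, Set.ncard_pair hw.ne]
    let T : Set V := {u, w} ∪ (S ∩ (↑(P j) : Set V))
    have clos : ∀ x y, x ∈ T → (C j).Adj x y → y ∈ T := by
      rintro x y ((rfl | rfl) | hx) hxy
      · right; rw [← ku]; exact hxy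
      · right; rw [← kw]; exact hxy
      · left; rw [← ks x hx]; exact hxy
    have hsub : (↑(P j) : Set V) ⊆ T := by
      intro x hx
      obtain ⟨p⟩ := (hCconn j).preconnected ⟨u, hu⟩ ⟨x, hx⟩
      have : ∀ (a c : (↑(P j) : Set V)), ((C j).induce (↑(P j) : Set V)).Walk a c →
          a.1 ∈ T → c.1 ∈ T := by
        intro a c q
        induction q with
        | nil => exact id
        | cons h _ ih => exact fun ha => ih (clos _ _ ha h)
      exact this _ _ p (Or.inl (Or.inl rfl))
    have h1 := Set.ncard_le_ncard hsub (Set.toFinite _)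
    have h2 : T.ncard ≤ _ := Set.ncard_union_le _ _
    rw [hSj, Set.ncard_pair hw.ne] at h2
    rw [Set.ncard_coe_finset] at h1
    have := hP5 j
    omega
  have Rall : ∀ u, u ∉ S → R u := by
    intro u hu
    obtain ⟨t, ht⟩ := hPcover u
    by_cases htj : t = j
    · subst htj; exact Rj u ht hu
    · exact Rt t htj u ht hu
  haveI : Nonempty (Sᶜ : Set V) := ⟨⟨b, hiS b hb⟩⟩
  refine ⟨?_⟩
  rintro ⟨x, hx⟩ ⟨y, hy⟩
  obtain ⟨_, h1⟩ := Rall x hx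
  obtain ⟨_, h2⟩ := Rall y hy
  exact h1.trans h2.symm
end

section
/- Let k ≥ 3 and m ≥ 5 be integers and set n = (k−1)m. Let G be a simple graph on a vertex set V of size n with a partition V = V_1 ∪ … ∪ V_{k−1} into pairwise disjoint sets each of size m, such that for every i the edges of G with both endpoints in V_i form a cycle passing through every vertex of V_i, for every i < j the edges of G with one endpoint in V_i and one endpoint in V_j form a perfect matching between V_i and V_j (m pairwise disjoint edges covering V_i ∪ V_j), and G has no other edges. Then G is k-vertex-connected and G has exactly kn/2 edges. -/
theorem aux_ind {W : Type*} (H : SimpleGraph W) (s : Set W) {x y : W} (p : H.Walk x y)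
    (h : ∀ z ∈ p.support, z ∈ s) (hx : x ∈ s) (hy : y ∈ s) :
    (H.induce s).Reachable ⟨x, hx⟩ ⟨y, hy⟩ := ⟨p.induce s h⟩

theorem aux_cycle_s4 {W : Type*} [Finite W] (H : SimpleGraph W) (hc : H.Connected)
    (h2 : ∀ w, (H.neighborSet w).ncard = 2) (v : W) (x y : W) (hx : x ∈ ({v}ᶜ : Set W))
    (hy : y ∈ ({v}ᶜ : Set W)) : (H.induce {v}ᶜ).Reachable ⟨x, hx⟩ ⟨y, hy⟩ := by
  classical
  have hcyc : H.IsCycles := fun w _ => h2 w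
  have key : ∀ a c (ha : H.Adj v a) (hc : H.Adj v c),
      (H.induce {v}ᶜ).Reachable ⟨a, ha.ne'⟩ ⟨c, hc.ne'⟩ := by
    intro a c ha hc
    by_cases hac : a = c
    · subst hac; exact SimpleGraph.Reachable.refl _
    obtain ⟨p, hp⟩ := (hcyc.reachable_deleteEdges ha).exists_isPath
    cases p with
    | nil => exact absurd ha (H.irrefl)
    | @cons _ b _ h q =>
      rw [SimpleGraph.Walk.cons_isPath_iff] at hp
      rw [SimpleGraph.deleteEdges_adj] at h
      have hba : b ≠ a := by
        rintro rfl; exact h.2 rfl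
      have hbc : b = c := by
        by_contra hbc
        have hsub : ({a, b, c} : Set W) ⊆ H.neighborSet v := by
          rintro z (rfl | rfl | rfl)
          · exact ha
          · exact h.1
          · exact hc
        have := Set.ncard_le_ncard hsub (Set.toFinite _)
        rw [h2, Set.ncard_eq_three.2 ⟨a, b, c, hba.symm, hac, hbc, rfl⟩] at this
        omega
      subst hbc
      have hle : H.deleteEdges {s(v, a)} ≤ H := SimpleGraph.deleteEdges_le _
      refine (aux_ind H _ (q.mapLe hle) ?_ _ _).symm
      intro z hz
      rw [SimpleGraph.Walk.support_mapLe_eq_support] at hz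
      rintro rfl
      exact hp.2 hz
  have key2 : ∀ x (hx : x ∈ ({v}ᶜ : Set W)), ∃ a, ∃ ha : H.Adj v a,
      (H.induce {v}ᶜ).Reachable ⟨a, ha.ne'⟩ ⟨x, hx⟩ := by
    intro x hx
    obtain ⟨p, hp⟩ := (hc.preconnected v x).exists_isPath
    cases p with
    | nil => exact absurd rfl hx
    | @cons _ b _ h q =>
      rw [SimpleGraph.Walk.cons_isPath_iff] at hp
      refine ⟨b, h, aux_ind H _ q ?_ _ _⟩
      rintro z hz rfl
      exact hp.2 hz
  obtain ⟨a, ha, hax⟩ := key2 x hx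
  obtain ⟨c, hc', hcy⟩ := key2 y hy
  exact hax.symm.trans ((key a c ha hc').trans hcy)

/-- Let `k ≥ 3`, `m ≥ 5` and `n = (k-1)m`. Let `G` be a simple graph on a
vertex set `V` of size `n`, partitioned into pairwise disjoint sets `V_1, …, V_{k-1}` of
size `m`, such that for every `i` the edges of `G` inside `V_i` form a spanning cycle of
`V_i` (formalized: `G[V_i]` is connected and every vertex of `V_i` has exactly `2`
neighbors in `V_i`), and for all `i ≠ j` the edges of `G` between `V_i` and `V_j` form a
perfect matching (formalized: every vertex of `V_i` has exactly one neighbor in `V_j`).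
These conditions account for all edges of `G`. Then `G` is `k`-vertex-connected and
`G` has exactly `k * n / 2` edges. -/
theorem stmt_4 {V : Type*} [Fintype V] (k m n : ℕ) (hk : 3 ≤ k) (hm : 5 ≤ m)
    (hn : n = (k - 1) * m) (hcard : Fintype.card V = n)
    (G : SimpleGraph V) (P : Fin (k - 1) → Finset V)
    -- the `P i` partition `V` into sets of size `m`
    (hPdisj : ∀ i j : Fin (k - 1), i ≠ j → Disjoint (P i) (P j))
    (hPcover : ∀ v : V, ∃ i : Fin (k - 1), v ∈ P i)
    (hPcard : ∀ i : Fin (k - 1), (P i).card = m)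
    -- inside each part, the edges of `G` form a spanning cycle
    (hcycle : ∀ i : Fin (k - 1),
      (G.induce (↑(P i) : Set V)).Connected ∧
      ∀ u ∈ P i, (G.neighborSet u ∩ ↑(P i)).ncard = 2)
    -- between any two parts, the edges of `G` form a perfect matching
    (hmatch : ∀ i j : Fin (k - 1), i ≠ j →
      ∀ u ∈ P i, (G.neighborSet u ∩ ↑(P j)).ncard = 1) :
    (k < Fintype.card V ∧
      ∀ S : Set V, S.ncard ≤ k - 1 → (G.induce Sᶜ).Connected) ∧
    G.edgeSet.ncard = k * n / 2 := by
  classical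
  have hidx : ∀ i j v, v ∈ P i → v ∈ P j → i = j := by
    intro i j v hi hj
    by_contra hne
    exact Finset.disjoint_left.1 (hPdisj i j hne) hi hj
  have hnb : ∀ i j, i ≠ j → ∀ u ∈ P i, ∃ w ∈ P j, G.Adj u w ∧ ∀ z ∈ P j, G.Adj u z → z = w := by
    intro i j hij u hu
    obtain ⟨w, hw⟩ := Set.ncard_eq_one.1 (hmatch i j hij u hu)
    have h1 : w ∈ G.neighborSet u ∩ ↑(P j) := by rw [hw]; rfl
    refine ⟨w, h1.2, h1.1, fun z hz hz' => ?_⟩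
    have : z ∈ G.neighborSet u ∩ ↑(P j) := ⟨hz', hz⟩
    rw [hw] at this; exact this
  have hpart : ∀ i, ∀ v ∈ P i, ∀ (T : Set V), (∀ z ∈ P i, z ≠ v → z ∈ T) →
      ∀ x y (hx : x ∈ T) (hy : y ∈ T), x ∈ P i → y ∈ P i → x ≠ v → y ≠ v →
      (G.induce T).Reachable ⟨x, hx⟩ ⟨y, hy⟩ := by
    intro i v hv T hT x y hx hy hxi hyi hxv hyv
    have h2 : ∀ w, ((G.induce (↑(P i) : Set V)).neighborSet w).ncard = 2 := by
      rintro ⟨w, hw⟩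
      rw [← (hcycle i).2 w hw, ← Set.ncard_image_of_injective _ Subtype.val_injective]
      congr 1
      ext z
      simp [and_comm]
    have h := aux_cycle_s4 _ (hcycle i).1 h2 ⟨v, hv⟩ ⟨x, hxi⟩ ⟨y, hyi⟩
      (fun h => hxv (congrArg Subtype.val h)) (fun h => hyv (congrArg Subtype.val h))
    let f : ((G.induce (↑(P i) : Set V)).induce {⟨v, hv⟩}ᶜ) →g G.induce T :=
      { toFun := fun z => ⟨z.1.1, hT _ z.1.2 (fun h => z.2 (Subtype.ext h))⟩
        map_rel' := fun h => h }
    exact h.map f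
  refine ⟨⟨?_, ?_⟩, ?_⟩
  · rw [hcard, hn]
    obtain ⟨t, rfl⟩ : ∃ t, k = t + 3 := ⟨k - 3, by omega⟩
    simp only [Nat.add_sub_cancel, show t + 3 - 1 = t + 2 by omega]
    nlinarith
  · intro S hS
    by_cases hA : ∃ j, ∀ z ∈ P j, z ∉ S
    · obtain ⟨j, hj⟩ := hA
      have hne : (P j).Nonempty := Finset.card_pos.1 (by rw [hPcard]; omega)
      obtain ⟨r, hr⟩ := hne
      have hin : ∀ y (hy : y ∈ P j), (G.induce Sᶜ).Reachable ⟨r, hj r hr⟩ ⟨y, hj y hy⟩ := by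
        intro y hy
        let f : (G.induce (↑(P j) : Set V)) →g G.induce Sᶜ :=
          { toFun := fun z => ⟨z.1, hj _ z.2⟩
            map_rel' := fun h => h }
        exact ((hcycle j).1.preconnected ⟨r, hr⟩ ⟨y, hy⟩).map f
      rw [SimpleGraph.connected_iff_exists_forall_reachable]
      refine ⟨⟨r, hj r hr⟩, ?_⟩
      rintro ⟨y, hy⟩
      obtain ⟨i, hi⟩ := hPcover y
      by_cases hij : i = j
      · subst hij; exact hin y hi
      · obtain ⟨w, hw, ha, -⟩ := hnb i j hij y hi
        refine (hin w hw).trans (SimpleGraph.Adj.reachable ?_)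
        exact ha.symm
    · push Not at hA
      choose f hf hfS using hA
      have hinj : Function.Injective f := fun i j h => hidx i j (f i) (hf i) (h ▸ hf j)
      have hr : Set.range f = S := by
        apply Set.eq_of_subset_of_ncard_le
        · rintro _ ⟨i, rfl⟩; exact hfS i
        · rw [← Set.image_univ, Set.ncard_image_of_injective _ hinj, Set.ncard_univ]
          simpa using hS
        · exact Set.toFinite _
      have hnot : ∀ i, ∀ z ∈ P i, z ≠ f i → z ∈ Sᶜ := by
        intro i z hz hne hzS
        rw [← hr] at hzS
        obtain ⟨j, rfl⟩ := hzS
        exact hne (by rw [hidx i j _ hz (hf j)])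
      have hne' : ∀ i, ∀ z, z ∈ Sᶜ → z ≠ f i := by
        rintro i _ h rfl; exact h (hfS i)
      have hpick : ∀ i, ∀ a b : V, ∃ x ∈ P i, x ≠ a ∧ x ≠ b := by
        intro i a b
        have : ((P i) \ {a, b}).Nonempty := by
          apply Finset.card_pos.1
          have h1 := Finset.le_card_sdiff ({a, b} : Finset V) (P i)
          have h2 := Finset.card_le_two (a := a) (b := b)
          rw [hPcard] at h1
          omega
        obtain ⟨x, hx⟩ := this
        simp at hx
        exact ⟨x, hx.1, hx.2.1, hx.2.2⟩
      have hpre : (G.induce Sᶜ).Preconnected := by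
        rintro ⟨x, hx⟩ ⟨y, hy⟩
        obtain ⟨i, hi⟩ := hPcover x
        obtain ⟨j, hj⟩ := hPcover y
        by_cases hij : i = j
        · subst hij
          exact hpart i (f i) (hf i) _ (hnot i) x y hx hy hi hj (hne' _ _ hx) (hne' _ _ hy)
        · obtain ⟨w, hw, hwa, hwu⟩ := hnb j i (Ne.symm hij) (f j) (hf j)
          obtain ⟨a, ha, haf, haw⟩ := hpick i (f i) w
          obtain ⟨b, hb, hab, -⟩ := hnb i j hij a ha
          have hbf : b ≠ f j := by
            rintro rfl
            exact haw (hwu a ha hab.symm)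
          have haS := hnot i a ha haf
          have hbS := hnot j b hb hbf
          refine (hpart i (f i) (hf i) _ (hnot i) x a hx haS hi ha (hne' _ _ hx) haf).trans ?_
          have hadj : (G.induce Sᶜ).Adj ⟨a, haS⟩ ⟨b, hbS⟩ := hab
          refine hadj.reachable.trans ?_
          exact hpart j (f j) (hf j) _ (hnot j) b y hbS hy hb hj hbf (hne' _ _ hy)
      obtain ⟨a, ha, haf, -⟩ := hpick ⟨0, by omega⟩ (f ⟨0, by omega⟩) (f ⟨0, by omega⟩)
      haveI : Nonempty ↑(Sᶜ) := ⟨⟨a, hnot _ a ha haf⟩⟩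
      exact ⟨hpre⟩
  · have hdeg : ∀ u, G.degree u = k := by
      intro u
      obtain ⟨i, hi⟩ := hPcover u
      have h1 : G.neighborFinset u =
          (Finset.univ : Finset (Fin (k-1))).biUnion (fun j => G.neighborFinset u ∩ P j) := by
        ext z
        obtain ⟨l, hl⟩ := hPcover z
        simp only [Finset.mem_biUnion, Finset.mem_univ, true_and, Finset.mem_inter]
        exact ⟨fun h => ⟨l, h, hl⟩, fun ⟨_, h, _⟩ => h⟩
      have h3 : ∀ j, (G.neighborFinset u ∩ P j).card = if j = i then 2 else 1 := by
        intro j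
        have : (G.neighborFinset u ∩ P j).card = (G.neighborSet u ∩ ↑(P j)).ncard := by
          rw [← Set.ncard_coe_finset]; simp
        rw [this]
        split_ifs with h
        · subst h; exact (hcycle j).2 u hi
        · exact hmatch i j (Ne.symm h) u hi
      rw [← SimpleGraph.card_neighborFinset_eq_degree, h1, Finset.card_biUnion]
      · simp only [h3]
        have : ∀ j : Fin (k-1), (if j = i then 2 else 1) = 1 + if j = i then 1 else 0 := by
          intro j; split_ifs <;> rfl
        simp only [this, Finset.sum_add_distrib]
        simp
        omega
      · intro a _ b _ hab
        exact (hPdisj a b hab).mono Finset.inter_subset_right Finset.inter_subset_right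
    have hs := G.sum_degrees_eq_twice_card_edges
    simp only [hdeg, Finset.sum_const, Finset.card_univ, hcard, smul_eq_mul] at hs
    rw [← SimpleGraph.coe_edgeFinset, Set.ncard_coe_finset, mul_comm k n, hs]
    omega
end

section
/- For every integer k ≥ 3 and every integer n divisible by k−1 with n ≥ 5(k−1), there exists a k-vertex-connected simple graph on n vertices with exactly kn/2 edges (note that kn is even under these assumptions). -/
open scoped Fin.NatCast Fin.CommRing in
theorem col_reach (a m : ℕ) (S : Set (Fin a × Fin (m+3))) (j : Fin a) (s : Fin (m+3)) (t : ℕ)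
    (h : ∀ u : ℕ, u ≤ t → (j, s + (u : Fin (m+3))) ∈ Sᶜ) :
    (((⊤ : SimpleGraph (Fin a)) □ SimpleGraph.cycleGraph (m+3)).induce Sᶜ).Reachable
      ⟨(j, s + ((0:ℕ) : Fin (m+3))), h 0 (Nat.zero_le _)⟩ ⟨(j, s + (t : Fin (m+3))), h t le_rfl⟩ := by
  induction t with
  | zero => exact SimpleGraph.Reachable.refl _
  | succ t ih =>
    refine (ih (fun u hu => h u (by omega))).trans (SimpleGraph.Adj.reachable ?_)
    simp only [SimpleGraph.comap_adj, Function.Embedding.subtype_apply, SimpleGraph.boxProd_adj]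
    right
    refine ⟨?_, by trivial⟩
    rw [SimpleGraph.cycleGraph_adj]
    right
    push_cast
    ring

open scoped Fin.NatCast Fin.CommRing in
theorem col_reach' (a m : ℕ) (S : Set (Fin a × Fin (m+3))) (j : Fin a) (s : Fin (m+3))
    (hs : ∀ i, i ≠ s → (j, i) ∈ Sᶜ) (i₁ i₂ : Fin (m+3)) (h1 : (j, i₁) ∈ Sᶜ) (h2 : (j, i₂) ∈ Sᶜ) 
    (h : (j, s) ∈ Sᶜ ∨ (i₁ ≠ s ∧ i₂ ≠ s)) :
    (((⊤ : SimpleGraph (Fin a)) □ SimpleGraph.cycleGraph (m+3)).induce Sᶜ).Reachable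
      ⟨(j, i₁), h1⟩ ⟨(j, i₂), h2⟩ := by
  have key : ∀ i (hi : (j, i) ∈ Sᶜ), ((j, s) ∈ Sᶜ ∨ i ≠ s) → ∀ h0 : (j, s + 1 + ((0:ℕ) : Fin (m+3))) ∈ Sᶜ,
      (((⊤ : SimpleGraph (Fin a)) □ SimpleGraph.cycleGraph (m+3)).induce Sᶜ).Reachable
      ⟨(j, s + 1 + ((0:ℕ) : Fin (m+3))), h0⟩ ⟨(j, i), hi⟩ := by
    intro i hi hh h0
    have e : s + 1 + (((i - (s+1)).val : ℕ) : Fin (m+3)) = i := by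
      rw [Fin.cast_val_eq_self]; ring
    have hlt := (i - (s+1)).isLt
    have := col_reach a m S j (s+1) (i - (s+1)).val (by
      intro u hu
      by_cases hj : (j, s) ∈ Sᶜ
      · by_cases hus : s + 1 + (u : Fin (m+3)) = s
        · rw [hus]; exact hj
        · exact hs _ hus
      · have hne : i ≠ s := by tauto
        apply hs
        intro hus
        have hz : ((u + 1 : ℕ) : Fin (m+3)) = 0 := by
          push_cast
          linear_combination hus
        have hd : (m+3) ∣ u + 1 := (Fin.natCast_eq_zero).1 hz
        have hle := Nat.le_of_dvd (by omega) hd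
        have : (i - (s+1)).val = u := by omega
        rw [this] at e
        exact hne (e.symm.trans hus))
    simp only [e] at this
    exact this
  have h0 : (j, s + 1 + ((0:ℕ) : Fin (m+3))) ∈ Sᶜ := by
    apply hs
    simp
  exact (key i₁ h1 (by tauto) h0).symm.trans (key i₂ h2 (by tauto) h0)

theorem row_reach (a m : ℕ) (S : Set (Fin a × Fin (m+3))) (j j' : Fin a) (i : Fin (m+3))
    (h1 : (j, i) ∈ Sᶜ) (h2 : (j', i) ∈ Sᶜ) :
    (((⊤ : SimpleGraph (Fin a)) □ SimpleGraph.cycleGraph (m+3)).induce Sᶜ).Reachable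
      ⟨(j, i), h1⟩ ⟨(j', i), h2⟩ := by
  by_cases h : j = j'
  · subst h; exact SimpleGraph.Reachable.refl _
  · apply SimpleGraph.Adj.reachable
    simp [SimpleGraph.boxProd_adj, h]

theorem box_conn (a m : ℕ) (ha : 0 < a) (S : Set (Fin a × Fin (m+3))) (hS : S.ncard ≤ a) :
    (((⊤ : SimpleGraph (Fin a)) □ SimpleGraph.cycleGraph (m+3)).induce Sᶜ).Connected := by
  classical
  have hne : Nonempty ↥(Sᶜ) := by
    by_contra hcon
    rw [Set.nonempty_coe_sort, Set.not_nonempty_iff_eq_empty, Set.compl_empty_iff] at hcon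
    rw [hcon, Set.ncard_univ, Nat.card_eq_fintype_card] at hS
    simp at hS
    nlinarith
  refine (SimpleGraph.connected_iff _).2 ⟨?_, hne⟩
  rintro ⟨⟨j, i⟩, h1⟩ ⟨⟨j', i'⟩, h2⟩
  by_cases hc : ∃ c, ∀ i, (c, i) ∈ Sᶜ
  · obtain ⟨c, hc⟩ := hc
    exact ((row_reach a m S j c i h1 (hc i)).trans
      (col_reach' a m S c 0 (fun i _ => hc i) i i' (hc i) (hc i') (Or.inl (hc _)))).trans
      (row_reach a m S c j' i' (hc i') h2)
  · push Not at hc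
    choose f hf using hc
    have hf' : ∀ c, (c, f c) ∈ S := fun c => by simpa using hf c
    have hinj : Function.Injective (fun c => (c, f c)) := fun x y h => (Prod.ext_iff.1 h).1
    have hr : Set.range (fun c => (c, f c)) = S := by
      apply Set.eq_of_subset_of_ncard_le
      · rintro _ ⟨c, rfl⟩; exact hf' c
      · rw [Set.ncard_range_of_injective hinj]; simpa using hS
      · exact Set.toFinite _
    have hmem : ∀ c i, i ≠ f c → (c, i) ∈ Sᶜ := by
      intro c i hi hin
      rw [← hr] at hin
      obtain ⟨c', hc'⟩ := hin
      simp only [Prod.mk.injEq] at hc'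
      obtain ⟨rfl, rfl⟩ := hc'
      exact hi rfl
    have hmem' : ∀ c i, (c, i) ∈ Sᶜ → i ≠ f c := by
      rintro c i hi rfl
      exact hi (hf' c)
    obtain ⟨r, hr⟩ : ∃ r : Fin (m+3), r ∉ ({f j, f j'} : Finset _) := by
      by_contra hcon
      push Not at hcon
      have := Finset.card_le_two (a := f j) (b := f j')
      rw [Finset.eq_univ_iff_forall.2 hcon] at this
      simp at this
    simp only [Finset.mem_insert, Finset.mem_singleton, not_or] at hr
    exact ((col_reach' a m S j (f j) (hmem j) i r h1 (hmem _ _ hr.1)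
        (Or.inr ⟨hmem' _ _ h1, hr.1⟩)).trans
      (row_reach a m S j j' r (hmem _ _ hr.1) (hmem _ _ hr.2))).trans
      (col_reach' a m S j' (f j') (hmem j') r i' (hmem _ _ hr.2) h2
        (Or.inr ⟨hr.2, hmem' _ _ h2⟩))

theorem box_edges (a m : ℕ) (ha : 0 < a) :
    ((⊤ : SimpleGraph (Fin a)) □ SimpleGraph.cycleGraph (m+3)).edgeSet.ncard
      = (a + 1) * (a * (m+3)) / 2 := by
  classical
  have h := ((⊤ : SimpleGraph (Fin a)) □ SimpleGraph.cycleGraph (m+3)).sum_degrees_eq_twice_card_edges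
  have hd : ∀ v, ((⊤ : SimpleGraph (Fin a)) □ SimpleGraph.cycleGraph (m+3)).degree v = a + 1 := by
    intro v
    have h1 : (⊤ : SimpleGraph (Fin a)).degree v.1 = a - 1 := by simp
    have h2 : (SimpleGraph.cycleGraph (m+3)).degree v.2 = 2 := SimpleGraph.cycleGraph_degree_three_le
    have h3 := SimpleGraph.degree_boxProd (G := (⊤ : SimpleGraph (Fin a)))
      (H := SimpleGraph.cycleGraph (m+3)) v
    have : ((⊤ : SimpleGraph (Fin a)) □ SimpleGraph.cycleGraph (m+3)).degree v = a - 1 + 2 := by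
      rw [← h1, ← h2]; convert h3
    omega
  rw [Finset.sum_congr rfl (fun v _ => (by convert hd v : _ = a + 1))] at h
  simp only [Finset.sum_const, Finset.card_univ, Fintype.card_prod, Fintype.card_fin, smul_eq_mul] at h
  rw [Set.ncard_eq_toFinset_card', ← SimpleGraph.edgeFinset]
  rw [mul_comm (a+1), h]
  omega

theorem stmt_5 (k n : ℕ) (hk : 3 ≤ k) (hdvd : (k - 1) ∣ n) (hn : 5 * (k - 1) ≤ n) :
    ∃ G : SimpleGraph (Fin n),
      (k < n ∧ ∀ S : Set (Fin n), S.ncard ≤ k - 1 → (G.induce Sᶜ).Connected) ∧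
      G.edgeSet.ncard = k * n / 2 := by
  obtain ⟨a, rfl⟩ : ∃ a, k = a + 1 := ⟨k - 1, by omega⟩
  simp only [Nat.add_sub_cancel] at *
  obtain ⟨m', rfl⟩ := hdvd
  have hm : 5 ≤ m' := by
    rw [mul_comm] at hn
    exact Nat.le_of_mul_le_mul_left hn (by omega)
  obtain ⟨m, rfl⟩ : ∃ m, m' = m + 3 := ⟨m' - 3, by omega⟩
  let e : Fin (a * (m+3)) ≃ Fin a × Fin (m+3) := finProdFinEquiv.symm
  let H := (⊤ : SimpleGraph (Fin a)) □ SimpleGraph.cycleGraph (m+3)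
  let φ : H.comap e ≃g H := SimpleGraph.Iso.comap e H
  refine ⟨H.comap e, ⟨by omega, ?_⟩, ?_⟩
  · intro S hS
    have h := box_conn a m (by omega) (e '' S) (by
      rwa [Set.ncard_image_of_injective _ e.injective])
    let ψ : (H.comap e).induce Sᶜ ≃g H.induce (e '' S)ᶜ :=
      { toEquiv := e.subtypeEquiv (by intro x; simp)
        map_rel_iff' := by intro x y; rfl }
    exact ψ.connected_iff.2 h
  · rw [← box_edges a m (by omega)]
    exact Nat.card_congr φ.mapEdgeSet
end
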